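/- Let ψ : ℝ → ℝ be a smooth function supported in [-1,1]. There exists a constant C > 0 such that for every natural number k and every s ∈ ℝ one has | ∫_ℝ e^{ist} t^k ψ(t) dt | ≤ C (1+k)² / (1+|s|)². -/

import Mathlib

/-! Let `M` bound `ψ, ψ', …, ψ⁽ⁿ⁾`. On `[-1, 1]` the `i`-th derivative of `t ^ k` is at most
`k ^ i`, so by Leibniz' rule the `n`-th derivative of `t ^ k ψ(t)` is at most
`∑ i ≤ n, (n choose i) k ^ i M = M (1 + k) ^ n`: the binomial theorem produces exactly the power of
`1 + k` in the claim. Differentiating `n` times multiplies the Fourier transform by `(-is) ^ n`,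
and together with the trivial bound by the `L¹` norm this gives the decay in `s`. The theorem is
the case `n = 2`. -/

open MeasureTheory Complex

noncomputable section

/-- The dispersive symbol `ω(ξ) = ξ |ξ|^(1+a)`. -/
def disp (a ξ : ℝ) : ℝ := ξ * |ξ| ^ (1 + a)

/-- Fourier transform on `ℝ`, convention `f̂(ξ) = ∫ e^{ixξ} f(x) dx`. -/
def FT1 (f : ℝ → ℂ) (ξ : ℝ) : ℂ :=
  ∫ x : ℝ, Complex.exp (Complex.I * ((x * ξ : ℝ) : ℂ)) * f x

/-- Spacetime Fourier transform, convention `f̂(ξ,λ) = ∫ e^{i(xξ+tλ)} f(x,t) dx dt`,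
for `f : ℝ × ℝ → ℂ` with first coordinate `x` (space) and second `t` (time). -/
def FT2 (f : ℝ × ℝ → ℂ) (ξ lam : ℝ) : ℂ :=
  ∫ p : ℝ × ℝ, Complex.exp (Complex.I * ((p.1 * ξ + p.2 * lam : ℝ) : ℂ)) * f p

/-- The dyadic cutoffs `χ_j`: `χ_0 = χ₀` and `χ_j(z) = χ(2^{-j} z)` for `j ≥ 1`. -/
def chiJ (χ₀ χ : ℝ → ℝ) (j : ℕ) (z : ℝ) : ℝ :=
  if j = 0 then χ₀ z else χ ((2 : ℝ) ^ (-(j : ℝ)) * z)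

/-- Hypotheses on the fixed dyadic cutoffs. -/
structure DyadicCutoffs (χ₀ χ : ℝ → ℝ) : Prop where
  smooth0 : ContDiff ℝ (⊤ : ℕ∞) χ₀
  even0 : ∀ z, χ₀ (-z) = χ₀ z
  mem0 : ∀ z, χ₀ z ∈ Set.Icc (0 : ℝ) 1
  supp0 : ∀ z, 2 < |z| → χ₀ z = 0
  one0 : ∀ z, |z| ≤ 1 → χ₀ z = 1
  smooth1 : ContDiff ℝ (⊤ : ℕ∞) χ
  even1 : ∀ z, χ (-z) = χ z
  mem1 : ∀ z, χ z ∈ Set.Icc (0 : ℝ) 1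
  supp1 : ∀ z, χ z ≠ 0 → 1 / 2 < |z| ∧ |z| < 2
  partition : ∀ z, ∑' j : ℕ, chiJ χ₀ χ j z = 1

/-- A smooth time cutoff supported in `[-1,1]`. -/
structure TimeCutoff (ψ : ℝ → ℝ) : Prop where
  smooth : ContDiff ℝ (⊤ : ℕ∞) ψ
  supp : ∀ t, ψ t ≠ 0 → |t| ≤ 1

/-- The norm `‖f‖_{X^b_s}`. -/
def Xnorm (a : ℝ) (χ₀ χ : ℝ → ℝ) (b s : ℝ) (f : ℝ × ℝ → ℂ) : ℝ :=
  ∑' j : ℕ, (2 : ℝ) ^ ((j : ℝ) * b) *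
    (∫ p : ℝ × ℝ, chiJ χ₀ χ j (p.2 - disp a p.1) * (1 + |p.1|) ^ (2 * s) *
      ‖FT2 f p.1 p.2‖ ^ 2) ^ ((1 : ℝ) / 2)

/-- The norm `‖f‖_{Y^b_{s₀,s₁}} = ‖x·f‖_{X^b_{s₀}} + ‖t·f‖_{X^b_{s₁}}`. -/
def Ynorm (a : ℝ) (χ₀ χ : ℝ → ℝ) (b s₀ s₁ : ℝ) (f : ℝ × ℝ → ℂ) : ℝ :=
  Xnorm a χ₀ χ b s₀ (fun p => (p.1 : ℂ) * f p) +
    Xnorm a χ₀ χ b s₁ (fun p => (p.2 : ℂ) * f p)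

/-- The norm `‖f‖_{Z^b_s} = ‖f‖_{X^b_s} + ‖f‖_{Y^b_{s-2s*,s}}`, where `s* = 1/2 + a/2`. -/
def Znorm (a : ℝ) (χ₀ χ : ℝ → ℝ) (b s : ℝ) (f : ℝ × ℝ → ℂ) : ℝ :=
  Xnorm a χ₀ χ b s f + Ynorm a χ₀ χ b (s - 2 * (1 / 2 + a / 2)) s f

/-- The norm `‖f‖_{X̃^b_s}`. -/
def XtildeNorm (a b s : ℝ) (f : ℝ × ℝ → ℂ) : ℝ :=
  (∫ p : ℝ × ℝ, (1 + |p.2 - disp a p.1|) ^ (2 * b) * (1 + |p.1|) ^ (2 * s) *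
    ‖FT2 f p.1 p.2‖ ^ 2) ^ ((1 : ℝ) / 2)

/-- The Sobolev norm `‖g‖_{H^s} = (∫ (1+|ξ|)^{2s} |ĝ(ξ)|² dξ)^{1/2}`. -/
def Hnorm (s : ℝ) (g : ℝ → ℂ) : ℝ :=
  (∫ ξ : ℝ, (1 + |ξ|) ^ (2 * s) * ‖FT1 g ξ‖ ^ 2) ^ ((1 : ℝ) / 2)

/-- The weighted norm `‖g‖_{F^s} = ‖g‖_{H^s} + ‖x·g‖_{H^{s-2s*}}` (here `sstar = s*`). -/
def Fnorm (sstar s : ℝ) (g : ℝ → ℂ) : ℝ :=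
  Hnorm s g + Hnorm (s - 2 * sstar) (fun x => (x : ℂ) * g x)

/-- The `L^p` norm `(∫ ‖f‖^p)^{1/p}`. -/
def Lpnorm {α : Type*} [MeasureSpace α] {E : Type*} [NormedAddCommGroup E]
    (p : ℝ) (f : α → E) : ℝ :=
  (∫ x, ‖f x‖ ^ p) ^ (1 / p)

/-- The linear propagator `W(t)`, defined via Fourier inversion so that its Fourier
transform in `x` is `e^{itω(ξ)} û₀(ξ)`. -/
def Wgrp (a : ℝ) (u₀ : ℝ → ℂ) (t x : ℝ) : ℂ :=
  ((1 / (2 * Real.pi) : ℝ) : ℂ) *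
    ∫ ξ : ℝ, Complex.exp (-(Complex.I * ((x * ξ : ℝ) : ℂ))) *
      (Complex.exp (Complex.I * ((t * disp a ξ : ℝ) : ℂ)) * FT1 u₀ ξ)

/-- The Fourier multiplier `D^σ` with symbol `|ξ|^σ`, via Fourier inversion. -/
def Dop (σ : ℝ) (g : ℝ → ℂ) (x : ℝ) : ℂ :=
  ((1 / (2 * Real.pi) : ℝ) : ℂ) *
    ∫ ξ : ℝ, Complex.exp (-(Complex.I * ((x * ξ : ℝ) : ℂ))) *
      (((|ξ| ^ σ : ℝ) : ℂ) * FT1 g ξ)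

section Derivatives

variable {𝕜 F : Type*} [NontriviallyNormedField 𝕜] [NormedAddCommGroup F] [NormedSpace 𝕜 F]

lemma norm_iteratedDeriv_pow_le {x : 𝕜} (hx : ‖x‖ ≤ 1) (k n : ℕ) :
    ‖iteratedDeriv n (fun y : 𝕜 => y ^ k) x‖ ≤ (k : ℝ) ^ n := by
  rw [iteratedDeriv_pow, norm_mul, norm_pow]
  calc ‖(k.descFactorial n : 𝕜)‖ * ‖x‖ ^ (k - n)
      ≤ k.descFactorial n * 1 := by
        gcongr
        · simpa using Nat.norm_cast_le (α := 𝕜) (k.descFactorial n)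
        · exact pow_le_one₀ (norm_nonneg x) hx
    _ ≤ (k : ℝ) ^ n := by
        rw [mul_one]
        exact_mod_cast Nat.descFactorial_le_pow k n

lemma norm_iteratedDeriv_pow_smul_le {f : 𝕜 → F} {n : ℕ} (hf : ContDiff 𝕜 n f) {x : 𝕜}
    (hx : ‖x‖ ≤ 1) {M : ℝ} (hM : ∀ m ≤ n, ‖iteratedDeriv m f x‖ ≤ M) (k : ℕ) :
    ‖iteratedDeriv n (fun y => y ^ k • f y) x‖ ≤ M * (1 + k) ^ n := by
  have hpow : ContDiff 𝕜 n fun y : 𝕜 => y ^ k := contDiff_id.pow k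
  have leibniz := norm_iteratedFDeriv_smul_le hpow hf x le_rfl
  simp only [norm_iteratedFDeriv_eq_norm_iteratedDeriv] at leibniz
  calc ‖iteratedDeriv n (fun y => y ^ k • f y) x‖
      ≤ ∑ i ∈ Finset.range (n + 1), (n.choose i : ℝ) *
          ‖iteratedDeriv i (fun y : 𝕜 => y ^ k) x‖ * ‖iteratedDeriv (n - i) f x‖ := leibniz
    _ ≤ ∑ i ∈ Finset.range (n + 1), (n.choose i : ℝ) * (k : ℝ) ^ i * M := by
        gcongr with i
        · exact norm_iteratedDeriv_pow_le hx k i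
        · exact hM _ (Nat.sub_le n i)
    _ = M * (1 + k) ^ n := by
        rw [add_comm 1 (k : ℝ), add_pow, Finset.mul_sum]
        refine Finset.sum_congr rfl fun i _ => ?_
        ring

lemma support_iteratedDeriv_subset (f : 𝕜 → F) (n : ℕ) :
    Function.support (iteratedDeriv n f) ⊆ tsupport f := by
  intro x hx
  refine support_iteratedFDeriv_subset (𝕜 := 𝕜) n ?_
  rwa [Function.mem_support, ← norm_ne_zero_iff, norm_iteratedFDeriv_eq_norm_iteratedDeriv,
    norm_ne_zero_iff]

lemma hasCompactSupport_iteratedDeriv {f : 𝕜 → F} (hc : HasCompactSupport f) (n : ℕ) :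
    HasCompactSupport (iteratedDeriv n f) :=
  hc.mono' (support_iteratedDeriv_subset f n)

lemma exists_forall_norm_iteratedDeriv_le {f : 𝕜 → F} {n : ℕ} (hf : ContDiff 𝕜 n f)
    (hc : HasCompactSupport f) : ∃ M > 0, ∀ m ≤ n, ∀ x, ‖iteratedDeriv m f x‖ ≤ M := by
  have hbdd : ∀ m ≤ n, ∃ B, ∀ x, ‖iteratedDeriv m f x‖ ≤ B := fun m hm =>
    (hf.continuous_iteratedDeriv m (mod_cast hm)).bounded_above_of_compact_support
      (hasCompactSupport_iteratedDeriv hc m)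
  choose! B hB using hbdd
  obtain ⟨M, hM⟩ := ((Finset.range (n + 1)).image B).exists_le
  refine ⟨max M 1, by positivity, fun m hm x => ?_⟩
  have hBM : B m ≤ M := hM _ (Finset.mem_image_of_mem B (Finset.mem_range_succ_iff.2 hm))
  exact (hB m hm x).trans (hBM.trans (le_max_left M 1))

end Derivatives

section FourierTransform

open scoped FourierTransform

lemma FT1_eq_fourier (f : ℝ → ℂ) (s : ℝ) : FT1 f s = 𝓕 f (-(s / (2 * Real.pi))) := by
  rw [Real.fourier_real_eq_integral_exp_smul]
  refine integral_congr_ae (.of_forall fun t => ?_)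
  have hphase : -2 * Real.pi * t * -(s / (2 * Real.pi)) = t * s := by field_simp
  simp only [hphase, smul_eq_mul, mul_comm I]

lemma FT1_iteratedDeriv {f : ℝ → ℂ} {n : ℕ} (hf : ContDiff ℝ n f)
    (hint : ∀ m ≤ n, Integrable (iteratedDeriv m f)) (s : ℝ) :
    FT1 (iteratedDeriv n f) s = (-(I * s)) ^ n * FT1 f s := by
  have hfourier := Real.fourier_iteratedDeriv (N := n) hf (fun m hm => hint m (mod_cast hm)) le_rfl
  have hfactor : 2 * Real.pi * I * (-(s / (2 * Real.pi)) : ℝ) = -(I * s) := by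
    push_cast
    field_simp
  rw [FT1_eq_fourier, FT1_eq_fourier, congrFun hfourier, hfactor, smul_eq_mul]

lemma norm_FT1_le {f : ℝ → ℂ} {K : Set ℝ} (hK : volume K < ⊤) (hsupp : Function.support f ⊆ K)
    {A : ℝ} (hA : ∀ t ∈ K, ‖f t‖ ≤ A) (s : ℝ) : ‖FT1 f s‖ ≤ A * volume.real K := by
  have hrestrict : ∫ t in K, cexp (I * ((t * s : ℝ) : ℂ)) * f t = FT1 f s :=
    setIntegral_eq_integral_of_forall_compl_eq_zero fun t ht => by
      rw [Function.notMem_support.1 (mt (@hsupp t) ht), mul_zero]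
  rw [← hrestrict]
  refine norm_setIntegral_le_of_norm_le_const hK fun t ht => ?_
  rw [norm_mul, norm_exp_I_mul_ofReal, one_mul]
  exact hA t ht

lemma one_add_abs_pow_mul_norm_FT1_le {f : ℝ → ℂ} {n : ℕ} (hf : ContDiff ℝ n f) {K : Set ℝ}
    (hK : IsCompact K) (hsupp : Function.support f ⊆ K) {A B : ℝ} (hA : ∀ t ∈ K, ‖f t‖ ≤ A)
    (hB : ∀ t ∈ K, ‖iteratedDeriv n f t‖ ≤ B) (s : ℝ) :
    (1 + |s|) ^ n * ‖FT1 f s‖ ≤ 2 ^ (n - 1) * ((A + B) * volume.real K) := by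
  have hc : HasCompactSupport f := .of_support_subset_isCompact hK hsupp
  have hint : ∀ m ≤ n, Integrable (iteratedDeriv m f) := fun m hm =>
    (hf.continuous_iteratedDeriv m (mod_cast hm)).integrable_of_hasCompactSupport
      (hasCompactSupport_iteratedDeriv hc m)
  have hsupp' : Function.support (iteratedDeriv n f) ⊆ K :=
    (support_iteratedDeriv_subset f n).trans (closure_minimal hsupp hK.isClosed)
  have hlow : ‖FT1 f s‖ ≤ A * volume.real K := norm_FT1_le hK.measure_lt_top hsupp hA s
  have hhigh : |s| ^ n * ‖FT1 f s‖ ≤ B * volume.real K := by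
    simpa [FT1_iteratedDeriv hf hint] using norm_FT1_le hK.measure_lt_top hsupp' hB s
  calc (1 + |s|) ^ n * ‖FT1 f s‖
      ≤ 2 ^ (n - 1) * (1 ^ n + |s| ^ n) * ‖FT1 f s‖ := by
        gcongr
        exact add_pow_le zero_le_one (abs_nonneg s) n
    _ = 2 ^ (n - 1) * (‖FT1 f s‖ + |s| ^ n * ‖FT1 f s‖) := by ring
    _ ≤ 2 ^ (n - 1) * ((A + B) * volume.real K) := by
        rw [add_mul]
        gcongr

end FourierTransform

theorem statement19_general {n : ℕ} {ψ : ℝ → ℂ} (hψ : ContDiff ℝ n ψ)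
    (hsupp : Function.support ψ ⊆ Set.Icc (-1) 1) :
    ∃ C > 0, ∀ (k : ℕ) (s : ℝ),
      ‖FT1 (fun t => t ^ k • ψ t) s‖ ≤ C * (1 + (k : ℝ)) ^ n / (1 + |s|) ^ n := by
  obtain ⟨M, hM_pos, hM⟩ := exists_forall_norm_iteratedDeriv_le hψ
    (.of_support_subset_isCompact isCompact_Icc hsupp)
  refine ⟨2 ^ (n - 1) * (4 * M), by positivity, fun k s => ?_⟩
  have hsmooth : ContDiff ℝ n fun t => t ^ k • ψ t := (contDiff_id.pow k).smul hψ
  have hsupp_k : Function.support (fun t => t ^ k • ψ t) ⊆ Set.Icc (-1) 1 :=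
    (Function.support_smul_subset_right (fun t => t ^ k) ψ).trans hsupp
  have hderiv : ∀ m ≤ n, ∀ t ∈ Set.Icc (-1 : ℝ) 1,
      ‖iteratedDeriv m (fun t => t ^ k • ψ t) t‖ ≤ M * (1 + k) ^ n := fun m hm t ht =>
    (norm_iteratedDeriv_pow_smul_le (hψ.of_le (mod_cast hm)) (abs_le.2 ht)
      (fun i hi => hM i (hi.trans hm) t) k).trans (by gcongr; linarith [k.cast_nonneg (α := ℝ)])
  have hdecay := one_add_abs_pow_mul_norm_FT1_le hsmooth isCompact_Icc hsupp_k
    (fun t ht => by simpa using hderiv 0 n.zero_le t ht) (hderiv n le_rfl) s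
  rw [Real.volume_real_Icc] at hdecay
  rw [le_div_iff₀' (by positivity)]
  refine hdecay.trans_eq ?_
  norm_num
  ring

theorem statement19 (ψ : ℝ → ℝ) (hψ : TimeCutoff ψ) :
    ∃ C > 0, ∀ (k : ℕ) (s : ℝ),
      ‖∫ t : ℝ, Complex.exp (Complex.I * ((s * t : ℝ) : ℂ)) * ((t ^ k * ψ t : ℝ) : ℂ)‖ ≤
        C * (1 + (k : ℝ)) ^ 2 / (1 + |s|) ^ 2 := by
  have hsupp : Function.support (fun t => (ψ t : ℂ)) ⊆ Set.Icc (-1) 1 := fun t ht =>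
    abs_le.1 (hψ.supp t (by simpa using ht))
  simpa [FT1, mul_comm] using statement19_general (n := 2)
    (ofRealCLM.contDiff.comp (contDiff_infty.1 hψ.smooth 2)) hsupp
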